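/- (Corporate bond price formula verification.) Let σ_V > 0, ρ ∈ ℝ with |ρ| < 1, T ∈ ℝ, K > 0, α > 0, m > 0, n ≥ 0, let Σ_p : ℝ → ℝ be continuous, and let r : ℝ × (0,∞) → ℝ be an arbitrary function. For t < T set σ(t)² = ∫_{t}^{T} [σ_V² + 2ρσ_VΣ_p(u) + Σ_p(u)²] du (which is positive since |ρ| < 1 and σ_V > 0) and σ(t) = √(σ(t)²). Define, for V, p > 0 and t < T, C(V, p, t) = K·p + (α/(m+nα))·V·N(d̃₁) − K·p·N(d̃₂), where d̃₁ = (ln((V/(K·p))·(α/(m+nα))) + σ(t)²/2)/σ(t) and d̃₂ = d̃₁ − σ(t). Then C satisfies ∂C/∂t + (1/2)[σ_V²V² ∂²C/∂V² − 2ρσ_VΣ_p(t) V p ∂²C/∂V∂p + Σ_p(t)²p² ∂²C/∂p²] + r(t,p)·V ∂C/∂V + r(t,p)·p ∂C/∂p − r(t,p)·C = 0 at every point (V, p, t) with V, p > 0 and t < T. -/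

import Mathlib

/-- The standard normal cumulative distribution function
`N(x) = (2π)^{-1/2} ∫_{-∞}^{x} e^{-u²/2} du`. -/
noncomputable def stdNormalCDF (x : ℝ) : ℝ :=
  (Real.sqrt (2 * Real.pi))⁻¹ * ∫ u in Set.Iic x, Real.exp (-u ^ 2 / 2)

/-!
The price depends on `V`, `p`, `t` only through `x = αV/(m + nα)`, `y = Kp` and the remaining
variance `w = σ(t)²`: it is the value `G(x, y, w)` of the larger of two assets. The identity
`x φ(d̃₁) = y φ(d̃₂)` removes every density term from the first derivatives of `G` in `x` and `y`,
so `G_x = N(d̃₁)` and `G_y = 1 - N(d̃₂)`. Hence `G = x G_x + y G_y`, which kills the terms in `r`,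
and `x² G_xx = y² G_yy = -x y G_xy = 2 G_w`, so that the second-order terms add up to
`(σ_V² + 2ρσ_VΣ_p + Σ_p²) G_w`, which is the negative of the time derivative.
The equation is invariant under rescaling `V` and `p`.
-/

open Real Set Topology MeasureTheory ProbabilityTheory

section NormalDistribution

theorem gaussianPDFReal_zero_one (x : ℝ) :
    gaussianPDFReal 0 1 x = (√(2 * π))⁻¹ * exp (-x ^ 2 / 2) := by
  simp only [gaussianPDFReal, NNReal.coe_one, mul_one, sub_zero]

theorem hasDerivAt_setIntegral_Iic {E : Type*} [NormedAddCommGroup E] [NormedSpace ℝ E]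
    [CompleteSpace E] {f : ℝ → E} {x : ℝ} (hf : Integrable f) (hcont : ContinuousAt f x) :
    HasDerivAt (fun z => ∫ u in Iic z, f u) (f x) x := by
  have split : (fun z => ∫ u in Iic z, f u) =
      fun z => (∫ u in Iic 0, f u) + ∫ u in (0 : ℝ)..z, f u := by
    funext z
    rw [← intervalIntegral.integral_Iic_sub_Iic hf.integrableOn hf.integrableOn,
      add_sub_cancel]
  rw [split]
  exact (intervalIntegral.integral_hasDerivAt_right hf.intervalIntegrable
    hf.aestronglyMeasurable.stronglyMeasurableAtFilter hcont).const_add _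

theorem hasDerivAt_stdNormalCDF (x : ℝ) :
    HasDerivAt stdNormalCDF (gaussianPDFReal 0 1 x) x := by
  have cdf_eq : stdNormalCDF = fun z => ∫ u in Iic z, gaussianPDFReal 0 1 u := by
    funext z
    simp only [stdNormalCDF, gaussianPDFReal_zero_one, integral_const_mul]
  rw [cdf_eq]
  exact hasDerivAt_setIntegral_Iic (integrable_gaussianPDFReal 0 1)
    (by simp only [funext gaussianPDFReal_zero_one]; fun_prop)

end NormalDistribution

section PricingOperator

/-- The left-hand side of the pricing equation at `(V, p, t)`, for a firm value of volatility `σ`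
and a bond price of volatility `S` whose logarithms have covariation `-ρσS`. The coefficients are
numbers, namely the values at `(V, p, t)` of possibly varying ones. -/
noncomputable def pricingOperator (σ ρ S r : ℝ) (C : ℝ → ℝ → ℝ → ℝ) (V p t : ℝ) : ℝ :=
  deriv (fun τ => C V p τ) t
    + (1 / 2) * (σ ^ 2 * V ^ 2 * deriv (deriv (fun v => C v p t)) V
        - 2 * ρ * σ * S * V * p * deriv (fun v => deriv (fun q => C v q t) p) V
        + S ^ 2 * p ^ 2 * deriv (deriv (fun q => C V q t)) p)
    + r * V * deriv (fun v => C v p t) V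
    + r * p * deriv (fun q => C V q t) p
    - r * C V p t

variable {σ ρ S r V p t T : ℝ}

theorem pricingOperator_congr {C D : ℝ → ℝ → ℝ → ℝ}
    (hCD : ∀ V p t, 0 < V → 0 < p → t < T → C V p t = D V p t)
    (hV : 0 < V) (hp : 0 < p) (ht : t < T) :
    pricingOperator σ ρ S r C V p t = pricingOperator σ ρ S r D V p t := by
  have time : EqOn (fun τ => C V p τ) (fun τ => D V p τ) (Iio T) :=
    fun τ hτ => hCD V p τ hV hp hτ
  have firm : EqOn (fun v => C v p t) (fun v => D v p t) (Ioi 0) :=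
    fun v hv => hCD v p t hv hp ht
  have bond {v : ℝ} (hv : 0 < v) : EqOn (fun q => C v q t) (fun q => D v q t) (Ioi 0) :=
    fun q hq => hCD v q t hv hq ht
  have mixed : EqOn (fun v => deriv (fun q => C v q t) p) (fun v => deriv (fun q => D v q t) p)
      (Ioi 0) := fun v hv => (bond hv).deriv isOpen_Ioi hp
  simp only [pricingOperator, hCD V p t hV hp ht, time.deriv isOpen_Iio ht,
    firm.deriv isOpen_Ioi hV, (firm.deriv isOpen_Ioi).deriv isOpen_Ioi hV,
    (bond hV).deriv isOpen_Ioi hp, ((bond hV).deriv isOpen_Ioi).deriv isOpen_Ioi hp,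
    mixed.deriv isOpen_Ioi hV]

theorem pricingOperator_comp_mul (a K : ℝ) (C : ℝ → ℝ → ℝ → ℝ) :
    pricingOperator σ ρ S r (fun V p t => C (a * V) (K * p) t) V p t
      = pricingOperator σ ρ S r C (a * V) (K * p) t := by
  have chain (c : ℝ) (f : ℝ → ℝ) : deriv (fun x => f (c * x)) = fun x => c * deriv f (c * x) :=
    funext fun x => deriv_comp_mul_left c f x
  have firm (q : ℝ) := chain a fun v => C v q t
  have bond (v : ℝ) := chain K fun q => C v q t
  have firm_firm := chain a (deriv fun v => C v (K * p) t)
  have bond_bond := chain K (deriv fun q => C (a * V) q t)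
  have mixed := chain a fun v => deriv (fun q => C v q t) (K * p)
  simp only [pricingOperator, firm, bond, deriv_const_mul_field', firm_firm, bond_bond, mixed]
  ring

end PricingOperator

section BestOfPrice

/-- The Black–Scholes quantity `d̃₁` for assets worth `x` and `y` and remaining variance `w` of
their ratio. -/
noncomputable def dPlus (x y w : ℝ) : ℝ := (log (x / y) + w / 2) / √w

/-- The Black–Scholes quantity `d̃₂`. -/
noncomputable def dMinus (x y w : ℝ) : ℝ := dPlus x y w - √w

/-- The Black–Scholes price of the larger of two assets worth `x` and `y`, written as `y` plus
the option to exchange `y` for `x`, where `w` is the remaining variance of their ratio. -/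
noncomputable def bestOfPrice (x y w : ℝ) : ℝ :=
  y + x * stdNormalCDF (dPlus x y w) - y * stdNormalCDF (dMinus x y w)

theorem mul_gaussianPDFReal_dPlus {x y w : ℝ} (hx : 0 < x) (hy : 0 < y) (hw : 0 < w) :
    x * gaussianPDFReal 0 1 (dPlus x y w) = y * gaussianPDFReal 0 1 (dMinus x y w) := by
  have dPlus_mul_sqrt : dPlus x y w * √w = log (x / y) + w / 2 :=
    div_mul_cancel₀ _ (sqrt_pos.2 hw).ne'
  have exponent : -dMinus x y w ^ 2 / 2 = log (x / y) + -dPlus x y w ^ 2 / 2 := by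
    unfold dMinus
    linear_combination dPlus_mul_sqrt - sq_sqrt hw.le / 2
  rw [gaussianPDFReal_zero_one, gaussianPDFReal_zero_one, exponent, exp_add,
    exp_log (div_pos hx hy)]
  field_simp

section Curves

variable {x y w : ℝ → ℝ} {x' y' w' t : ℝ}

theorem hasDerivAt_dPlus (hx : HasDerivAt x x' t) (hy : HasDerivAt y y' t)
    (hw : HasDerivAt w w' t) (hxt : 0 < x t) (hyt : 0 < y t) (hwt : 0 < w t) :
    HasDerivAt (fun τ => dPlus (x τ) (y τ) (w τ))
      ((x' / x t - y' / y t) / √(w t)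
        + w' * (1 - dPlus (x t) (y t) (w t) / √(w t)) / (2 * √(w t))) t := by
  have hs : √(w t) ≠ 0 := (sqrt_pos.2 hwt).ne'
  have numerator := ((hx.fun_div hy hyt.ne').log (div_pos hxt hyt).ne').fun_add (hw.div_const 2)
  refine (numerator.fun_div (hw.sqrt hwt.ne') hs).congr_deriv ?_
  unfold dPlus
  field_simp
  ring

theorem hasDerivAt_bestOfPrice (hx : HasDerivAt x x' t) (hy : HasDerivAt y y' t)
    (hw : HasDerivAt w w' t) (hxt : 0 < x t) (hyt : 0 < y t) (hwt : 0 < w t) :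
    HasDerivAt (fun τ => bestOfPrice (x τ) (y τ) (w τ))
      (x' * stdNormalCDF (dPlus (x t) (y t) (w t))
        + y' * (1 - stdNormalCDF (dMinus (x t) (y t) (w t)))
        + w' * (x t * gaussianPDFReal 0 1 (dPlus (x t) (y t) (w t)) / (2 * √(w t)))) t := by
  -- The value of `δ` is irrelevant: it drops out by `mul_gaussianPDFReal_dPlus`.
  obtain ⟨δ, hdPlus⟩ : ∃ δ, HasDerivAt (fun τ => dPlus (x τ) (y τ) (w τ)) δ t :=
    ⟨_, hasDerivAt_dPlus hx hy hw hxt hyt hwt⟩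
  have hdMinus : HasDerivAt (fun τ => dMinus (x τ) (y τ) (w τ)) (δ - w' / (2 * √(w t))) t :=
    hdPlus.fun_sub (hw.sqrt hwt.ne')
  have hNPlus := (hasDerivAt_stdNormalCDF _).comp t hdPlus
  have hNMinus := (hasDerivAt_stdNormalCDF _).comp t hdMinus
  refine ((hy.fun_add (hx.fun_mul hNPlus)).fun_sub (hy.fun_mul hNMinus)).congr_deriv ?_
  simp only [Function.comp_apply]
  linear_combination (δ - w' / (2 * √(w t))) * mul_gaussianPDFReal_dPlus hxt hyt hwt

end Curves

section Partials

variable {x y w : ℝ}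

theorem hasDerivAt_bestOfPrice_left (hx : 0 < x) (hy : 0 < y) (hw : 0 < w) :
    HasDerivAt (fun ξ => bestOfPrice ξ y w) (stdNormalCDF (dPlus x y w)) x := by
  simpa using hasDerivAt_bestOfPrice (hasDerivAt_id' x) (hasDerivAt_const x y)
    (hasDerivAt_const x w) hx hy hw

theorem hasDerivAt_bestOfPrice_right (hx : 0 < x) (hy : 0 < y) (hw : 0 < w) :
    HasDerivAt (fun η => bestOfPrice x η w) (1 - stdNormalCDF (dMinus x y w)) y := by
  simpa using hasDerivAt_bestOfPrice (hasDerivAt_const y x) (hasDerivAt_id' y)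
    (hasDerivAt_const y w) hx hy hw

theorem hasDerivAt_dPlus_left (hx : 0 < x) (hy : 0 < y) (hw : 0 < w) :
    HasDerivAt (fun ξ => dPlus ξ y w) (x⁻¹ / √w) x := by
  simpa using hasDerivAt_dPlus (hasDerivAt_id' x) (hasDerivAt_const x y)
    (hasDerivAt_const x w) hx hy hw

theorem hasDerivAt_dPlus_right (hx : 0 < x) (hy : 0 < y) (hw : 0 < w) :
    HasDerivAt (fun η => dPlus x η w) (-(y⁻¹ / √w)) y := by
  simpa [neg_div] using hasDerivAt_dPlus (hasDerivAt_const y x)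
    (hasDerivAt_id' y) (hasDerivAt_const y w) hx hy hw

theorem deriv_deriv_bestOfPrice_left (hx : 0 < x) (hy : 0 < y) (hw : 0 < w) :
    deriv (deriv fun ξ => bestOfPrice ξ y w) x
      = gaussianPDFReal 0 1 (dPlus x y w) * (x⁻¹ / √w) := by
  have delta : EqOn (deriv fun ξ => bestOfPrice ξ y w) (fun ξ => stdNormalCDF (dPlus ξ y w))
      (Ioi 0) := fun ξ hξ => (hasDerivAt_bestOfPrice_left hξ hy hw).deriv
  rw [delta.deriv isOpen_Ioi hx]
  exact ((hasDerivAt_stdNormalCDF _).comp x (hasDerivAt_dPlus_left hx hy hw)).deriv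

theorem deriv_deriv_bestOfPrice_right (hx : 0 < x) (hy : 0 < y) (hw : 0 < w) :
    deriv (deriv fun η => bestOfPrice x η w) y
      = gaussianPDFReal 0 1 (dMinus x y w) * (y⁻¹ / √w) := by
  have delta : EqOn (deriv fun η => bestOfPrice x η w)
      (fun η => 1 - stdNormalCDF (dMinus x η w)) (Ioi 0) :=
    fun η hη => (hasDerivAt_bestOfPrice_right hx hη hw).deriv
  have hdMinus := (hasDerivAt_dPlus_right hx hy hw).sub_const √w
  rw [delta.deriv isOpen_Ioi hy]
  exact (((hasDerivAt_stdNormalCDF _).comp y hdMinus).const_sub 1).deriv.trans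
    (by rw [mul_neg, neg_neg, dMinus])

theorem deriv_left_deriv_right_bestOfPrice (hx : 0 < x) (hy : 0 < y) (hw : 0 < w) :
    deriv (fun ξ => deriv (fun η => bestOfPrice ξ η w) y) x
      = -(gaussianPDFReal 0 1 (dMinus x y w) * (x⁻¹ / √w)) := by
  have delta : EqOn (fun ξ => deriv (fun η => bestOfPrice ξ η w) y)
      (fun ξ => 1 - stdNormalCDF (dMinus ξ y w)) (Ioi 0) :=
    fun ξ hξ => (hasDerivAt_bestOfPrice_right hξ hy hw).deriv
  have hdMinus := (hasDerivAt_dPlus_left hx hy hw).sub_const √w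
  rw [delta.deriv isOpen_Ioi hx]
  exact (((hasDerivAt_stdNormalCDF _).comp x hdMinus).const_sub 1).deriv

end Partials

theorem pricingOperator_bestOfPrice {σ ρ S r x y t : ℝ} {w : ℝ → ℝ} (hx : 0 < x) (hy : 0 < y)
    (hw : 0 < w t) (hw' : HasDerivAt w (-(σ ^ 2 + 2 * ρ * σ * S + S ^ 2)) t) :
    pricingOperator σ ρ S r (fun x y τ => bestOfPrice x y (w τ)) x y t = 0 := by
  have hs : √(w t) ≠ 0 := (sqrt_pos.2 hw).ne'
  have theta := (hasDerivAt_bestOfPrice (hasDerivAt_const t x) (hasDerivAt_const t y) hw'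
    hx hy hw).deriv
  rw [pricingOperator, theta, (hasDerivAt_bestOfPrice_left hx hy hw).deriv,
    (hasDerivAt_bestOfPrice_right hx hy hw).deriv, deriv_deriv_bestOfPrice_left hx hy hw,
    deriv_deriv_bestOfPrice_right hx hy hw, deriv_left_deriv_right_bestOfPrice hx hy hw,
    bestOfPrice]
  have density := mul_gaussianPDFReal_dPlus hx hy hw
  field_simp
  linear_combination (-S ^ 2 - 2 * ρ * σ * S) * density

end BestOfPrice

section RemainingVariance

theorem sq_add_two_mul_mul_mul_add_sq_pos {σ ρ : ℝ} (hσ : σ ≠ 0) (hρ : |ρ| < 1) (S : ℝ) :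
    0 < σ ^ 2 + 2 * ρ * σ * S + S ^ 2 := by
  have hρ_sq : 0 < 1 - ρ ^ 2 := sub_pos.2 ((sq_lt_one_iff_abs_lt_one ρ).2 hρ)
  calc 0 < (S + ρ * σ) ^ 2 + (1 - ρ ^ 2) * σ ^ 2 := by positivity
    _ = σ ^ 2 + 2 * ρ * σ * S + S ^ 2 := by ring

variable {σ ρ : ℝ} {S : ℝ → ℝ}

theorem integral_variance_pos (hσ : σ ≠ 0) (hρ : |ρ| < 1) (hS : Continuous S) {t T : ℝ}
    (ht : t < T) : 0 < ∫ u in t..T, (σ ^ 2 + 2 * ρ * σ * S u + S u ^ 2) :=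
  intervalIntegral.intervalIntegral_pos_of_pos
    (Continuous.intervalIntegrable (by fun_prop) t T)
    (fun u => sq_add_two_mul_mul_mul_add_sq_pos hσ hρ (S u)) ht

theorem hasDerivAt_integral_variance (hS : Continuous S) (t T : ℝ) :
    HasDerivAt (fun τ => ∫ u in τ..T, (σ ^ 2 + 2 * ρ * σ * S u + S u ^ 2))
      (-(σ ^ 2 + 2 * ρ * σ * S t + S t ^ 2)) t := by
  have hcont : Continuous fun u => σ ^ 2 + 2 * ρ * σ * S u + S u ^ 2 := by fun_prop
  exact intervalIntegral.integral_hasDerivAt_left (hcont.intervalIntegrable t T)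
    (hcont.stronglyMeasurableAtFilter volume (𝓝 t)) hcont.continuousAt

end RemainingVariance

theorem corporate_bond_formula_verification_general {a K σ ρ S r T V p t : ℝ} {w : ℝ → ℝ}
    {C : ℝ → ℝ → ℝ → ℝ} (ha : 0 < a) (hK : 0 < K)
    (hw : 0 < w t) (hw' : HasDerivAt w (-(σ ^ 2 + 2 * ρ * σ * S + S ^ 2)) t)
    (hC : ∀ V p t : ℝ, 0 < V → 0 < p → t < T →
      C V p t = K * p
        + a * V * stdNormalCDF ((log (V / (K * p) * a) + w t / 2) / √(w t))
        - K * p * stdNormalCDF ((log (V / (K * p) * a) + w t / 2) / √(w t) - √(w t)))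
    (hV : 0 < V) (hp : 0 < p) (ht : t < T) :
    pricingOperator σ ρ S r C V p t = 0 := by
  have hC_eq (V p t : ℝ) (hV : 0 < V) (hp : 0 < p) (ht : t < T) :
      C V p t = bestOfPrice (a * V) (K * p) (w t) := by
    rw [hC V p t hV hp ht, div_mul_eq_mul_div, mul_comm V a]
    rfl
  calc pricingOperator σ ρ S r C V p t
    _ = pricingOperator σ ρ S r (fun V p t => bestOfPrice (a * V) (K * p) (w t)) V p t :=
      pricingOperator_congr hC_eq hV hp ht
    _ = pricingOperator σ ρ S r (fun x y t => bestOfPrice x y (w t)) (a * V) (K * p) t :=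
      pricingOperator_comp_mul a K fun x y t => bestOfPrice x y (w t)
    _ = 0 := pricingOperator_bestOfPrice (mul_pos ha hV) (mul_pos hK hp) hw hw'

/-- Corporate bond price formula verification: the explicit formula satisfies the
two-dimensional pricing PDE. -/
theorem corporate_bond_formula_verification (σV ρ T K α m n : ℝ)
    (hσV : 0 < σV) (hρ : |ρ| < 1) (hK : 0 < K) (hα : 0 < α) (hm : 0 < m) (hn : 0 ≤ n)
    (Sigp : ℝ → ℝ) (hSigp : Continuous Sigp)
    (r : ℝ → ℝ → ℝ)
    (s2 : ℝ → ℝ)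
    (hs2 : ∀ t, s2 t = ∫ u in t..T, (σV ^ 2 + 2 * ρ * σV * Sigp u + (Sigp u) ^ 2))
    (C : ℝ → ℝ → ℝ → ℝ)
    (hC : ∀ V p t : ℝ, 0 < V → 0 < p → t < T →
      C V p t = K * p
          + α / (m + n * α) * V * stdNormalCDF
              ((Real.log (V / (K * p) * (α / (m + n * α))) + s2 t / 2)
                / Real.sqrt (s2 t))
          - K * p * stdNormalCDF
              ((Real.log (V / (K * p) * (α / (m + n * α))) + s2 t / 2)
                  / Real.sqrt (s2 t)
                - Real.sqrt (s2 t))) :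
    ∀ V p t : ℝ, 0 < V → 0 < p → t < T →
      deriv (fun τ => C V p τ) t
          + (1 / 2) * (σV ^ 2 * V ^ 2 * deriv (deriv (fun v => C v p t)) V
              - 2 * ρ * σV * Sigp t * V * p
                  * deriv (fun v => deriv (fun q => C v q t) p) V
              + (Sigp t) ^ 2 * p ^ 2 * deriv (deriv (fun q => C V q t)) p)
          + r t p * V * deriv (fun v => C v p t) V
          + r t p * p * deriv (fun q => C V q t) p
          - r t p * C V p t = 0 := by
  intro V p t hV hp ht
  obtain rfl : s2 = _ := funext hs2
  exact corporate_bond_formula_verification_general (by positivity) hK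
    (integral_variance_pos hσV.ne' hρ hSigp ht) (hasDerivAt_integral_variance hSigp t T) hC hV hp ht
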